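/- Let p ∈ ℕ, R > 0, c ≠ 0, and let W be either the weight W_{[-R,R]} or W = cosh(·/R). The truncated Fourier operator 𝓕_c : L²(W^{⊗p}) → L²([-1,1]^p), f ↦ 𝓕[f](c·)|_{[-1,1]^p}, is injective and has dense range: the closure in L²([-1,1]^p) of {𝓕[f](c·)|_{[-1,1]^p} : f ∈ L²(W^{⊗p})} is all of L²([-1,1]^p). (This is equivalent to the statement that the two families of singular functions of 𝓕_c form complete orthonormal systems of L²([-1,1]^p) and L²(W^{⊗p}) respectively.) -/

import Mathlib

open MeasureTheory Set
open scoped ENNReal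

/-- The Fourier transform on `ℝ^p` with the paper's convention
`𝓕[f](x) = ∫ e^{i b·x} f(b) db`. -/
noncomputable def paperFourierP (p : ℕ) (f : (Fin p → ℝ) → ℂ) (x : Fin p → ℝ) : ℂ :=
  ∫ b : Fin p → ℝ, Complex.exp (Complex.I * ((∑ j, b j * x j : ℝ) : ℂ)) * f b

/-- The weight `W_{[-R,R]}`, equal to `1` on `[-R,R]` and `+∞` outside. -/
noncomputable def boxWeight (R : ℝ) : ℝ → ℝ≥0∞ := fun b => if |b| ≤ R then 1 else ⊤

/-- The weight `cosh (·/R)`. -/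
noncomputable def coshWeight (R : ℝ) : ℝ → ℝ≥0∞ := fun b => ENNReal.ofReal (Real.cosh (b / R))

/-!
Both assertions rest on one uniqueness principle: a function `f` that is integrable against
`exp (δ ‖v‖)` vanishes as soon as its Fourier transform vanishes near `0`. Indeed, along each line
the transform extends holomorphically to a vertical strip, so it vanishes identically; splitting
`f` into real and imaginary, positive and negative parts, this says that finite measures with
exponential moments are determined by their characteristic functions near `0`.

Injectivity follows because the weight grows exponentially, so that by Cauchy–Schwarz every
function in the weighted `L²` space is exponentially integrable. For density it suffices to use
functions supported in a small ball around `0`, where the weight is bounded. The adjoint of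
`L²(ball) → L²(S)` is again a Fourier transform, now of functions supported in the bounded set `S`,
and it is injective by the same principle.
-/

section ExponentialMoments

open Complex Filter ProbabilityTheory
open scoped Topology

theorem complexMGF_mul_I_eq_of_eventually_eq {Ω Ω' : Type*} {mΩ : MeasurableSpace Ω}
    {mΩ' : MeasurableSpace Ω'} {μ : Measure Ω} {ν : Measure Ω'} {X : Ω → ℝ} {Y : Ω' → ℝ}
    (hX : 0 ∈ interior (integrableExpSet X μ)) (hY : 0 ∈ interior (integrableExpSet Y ν))
    (h : ∀ᶠ t : ℝ in 𝓝 0, complexMGF X μ (t * I) = complexMGF Y ν (t * I)) (t : ℝ) :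
    complexMGF X μ (t * I) = complexMGF Y ν (t * I) := by
  set strip : Set ℂ :=
    re ⁻¹' (interior (integrableExpSet X μ) ∩ interior (integrableExpSet Y ν))
  have mem_strip (s : ℝ) : (s * I : ℂ) ∈ strip := by simp [strip, hX, hY]
  have zero_mem_strip : (0 : ℂ) ∈ strip := by simpa only [ofReal_zero, zero_mul] using mem_strip 0
  have hconn : IsPreconnected strip :=
    ((convex_integrableExpSet.interior.inter convex_integrableExpSet.interior).linear_preimage
      reLm).isPreconnected
  have htendsto : Tendsto (fun s : ℝ ↦ (s * I : ℂ)) (𝓝[≠] 0) (𝓝[≠] 0) := by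
    refine tendsto_nhdsWithin_iff.2 ⟨?_, ?_⟩
    · have : Continuous fun s : ℝ ↦ (s * I : ℂ) := by fun_prop
      simpa using (this.tendsto 0).mono_left nhdsWithin_le_nhds
    · filter_upwards [self_mem_nhdsWithin] with s hs
      simpa using hs
  refine AnalyticOnNhd.eqOn_of_preconnected_of_frequently_eq
    (analyticOnNhd_complexMGF.mono (preimage_mono inter_subset_left))
    (analyticOnNhd_complexMGF.mono (preimage_mono inter_subset_right)) hconn
    zero_mem_strip ?_ (mem_strip t)
  exact htendsto.frequently (h.filter_mono nhdsWithin_le_nhds).frequently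

variable {V : Type*} [NormedAddCommGroup V] [NormedSpace ℝ V] [MeasurableSpace V] {δ : ℝ}

theorem complexMGF_mul_I_eq_charFunDual (μ : Measure V) (ℓ : StrongDual ℝ V) (t : ℝ) :
    complexMGF ℓ μ (t * I) = charFunDual μ (t • ℓ) := by
  simp only [complexMGF, charFunDual_apply, smul_apply, smul_eq_mul, ofReal_mul, mul_right_comm]

variable [BorelSpace V]

theorem zero_mem_interior_integrableExpSet {μ : Measure V} (hδ : 0 < δ)
    (hμ : Integrable (fun v ↦ Real.exp (δ * ‖v‖)) μ) (ℓ : StrongDual ℝ V) :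
    0 ∈ interior (integrableExpSet ℓ μ) := by
  have hsmall : ∀ᶠ t : ℝ in 𝓝 0, |t| * ‖ℓ‖ < δ := by
    have : Continuous fun t : ℝ ↦ |t| * ‖ℓ‖ := by fun_prop
    exact this.tendsto 0 |>.eventually_lt_const (by simpa)
  rw [mem_interior_iff_mem_nhds]
  filter_upwards [hsmall] with t ht
  refine hμ.mono' (by fun_prop) (ae_of_all _ fun v ↦ ?_)
  rw [Real.norm_eq_abs, Real.abs_exp, Real.exp_le_exp]
  calc t * ℓ v ≤ ‖t * ℓ v‖ := le_abs_self _
    _ = |t| * ‖ℓ v‖ := by rw [norm_mul, Real.norm_eq_abs]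
    _ ≤ |t| * (‖ℓ‖ * ‖v‖) := by gcongr; exact ℓ.le_opNorm v
    _ = |t| * ‖ℓ‖ * ‖v‖ := by ring
    _ ≤ δ * ‖v‖ := by gcongr

variable [CompleteSpace V] [SecondCountableTopology V]

theorem measure_ext_of_charFunDual_eventually_eq {μ ν : Measure V}
    [IsFiniteMeasure μ] [IsFiniteMeasure ν] (hδ : 0 < δ)
    (hμ : Integrable (fun v ↦ Real.exp (δ * ‖v‖)) μ)
    (hν : Integrable (fun v ↦ Real.exp (δ * ‖v‖)) ν)
    (h : ∀ ℓ : StrongDual ℝ V, ∀ᶠ t : ℝ in 𝓝 0, charFunDual μ (t • ℓ) = charFunDual ν (t • ℓ)) :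
    μ = ν := by
  refine Measure.ext_of_charFunDual (funext fun ℓ ↦ ?_)
  have := complexMGF_mul_I_eq_of_eventually_eq (zero_mem_interior_integrableExpSet hδ hμ ℓ)
    (zero_mem_interior_integrableExpSet hδ hν ℓ)
    (by simpa only [complexMGF_mul_I_eq_charFunDual] using h ℓ) 1
  simpa only [complexMGF_mul_I_eq_charFunDual, one_smul] using this

end ExponentialMoments

section SignedDensity

variable {α : Type*} {mα : MeasurableSpace α} {μ : Measure α} {f : α → ℝ}

theorem integrable_withDensity_ofReal {E : Type*} [NormedAddCommGroup E] [NormedSpace ℝ E]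
    {φ : α → E} (hf : AEMeasurable f μ) (hφ : AEStronglyMeasurable φ μ)
    (hfφ : Integrable (fun x ↦ f x • φ x) μ) :
    Integrable φ (μ.withDensity fun x ↦ ENNReal.ofReal (f x)) := by
  rw [integrable_withDensity_iff_integrable_smul₀' hf.ennreal_ofReal (by simp)]
  refine hfφ.mono (hf.ennreal_ofReal.ennreal_toReal.aestronglyMeasurable.smul hφ)
    (ae_of_all _ fun x ↦ ?_)
  simp only [ENNReal.toReal_ofReal', norm_smul]
  gcongr
  rw [Real.norm_of_nonneg (le_max_right _ _)]
  exact max_le (le_abs_self _) (abs_nonneg _)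

theorem integral_withDensity_ofReal_sub_neg {E : Type*} [NormedAddCommGroup E] [NormedSpace ℝ E]
    {φ : α → E} (hf : AEMeasurable f μ) (hφ : AEStronglyMeasurable φ μ)
    (hfφ : Integrable (fun x ↦ f x • φ x) μ) :
    ∫ x, φ x ∂(μ.withDensity fun x ↦ ENNReal.ofReal (f x)) -
      ∫ x, φ x ∂(μ.withDensity fun x ↦ ENNReal.ofReal (-f x)) = ∫ x, f x • φ x ∂μ := by
  have hf' : AEMeasurable (fun x ↦ -f x) μ := hf.neg
  have hpos := integrable_withDensity_ofReal hf hφ hfφ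
  have hneg := integrable_withDensity_ofReal hf' hφ (by simpa only [neg_smul] using hfφ.fun_neg)
  rw [integrable_withDensity_iff_integrable_smul₀' hf.ennreal_ofReal (by simp)] at hpos
  rw [integrable_withDensity_iff_integrable_smul₀' hf'.ennreal_ofReal (by simp)] at hneg
  rw [integral_withDensity_eq_integral_toReal_smul₀ hf.ennreal_ofReal (by simp),
    integral_withDensity_eq_integral_toReal_smul₀ hf'.ennreal_ofReal (by simp),
    ← integral_sub hpos hneg]
  refine integral_congr_ae (ae_of_all _ fun x ↦ ?_)
  simp only [ENNReal.toReal_ofReal', ← sub_smul, max_zero_sub_max_neg_zero_eq_self]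

theorem ae_eq_zero_of_withDensity_ofReal_eq_neg [SigmaFinite μ] (hf : AEMeasurable f μ)
    (h : μ.withDensity (fun x ↦ ENNReal.ofReal (f x)) =
      μ.withDensity fun x ↦ ENNReal.ofReal (-f x)) : f =ᵐ[μ] 0 := by
  have hf' : AEMeasurable (fun x ↦ -f x) μ := hf.neg
  filter_upwards [(withDensity_eq_iff_of_sigmaFinite hf.ennreal_ofReal hf'.ennreal_ofReal).1 h]
    with x hx
  have hmax : max (f x) 0 = max (-f x) 0 := by
    simpa only [ENNReal.toReal_ofReal'] using congrArg ENNReal.toReal hx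
  have := max_zero_sub_max_neg_zero_eq_self (f x)
  rwa [hmax, sub_self, eq_comm] at this

end SignedDensity

section Uniqueness

open Complex Filter
open scoped Topology ComplexConjugate

variable {V : Type*} [NormedAddCommGroup V] [MeasurableSpace V] [BorelSpace V]
  {μ : Measure V} {δ : ℝ}

theorem integrable_of_integrable_exp_mul_norm_smul {E : Type*} [NormedAddCommGroup E]
    [NormedSpace ℝ E] {f : V → E} (hδ : 0 ≤ δ)
    (hf : Integrable (fun v ↦ Real.exp (δ * ‖v‖) • f v) μ) : Integrable f μ := by
  have hdecay (v : V) : ‖Real.exp (-(δ * ‖v‖))‖ ≤ 1 := by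
    rw [Real.norm_eq_abs, Real.abs_exp, Real.exp_le_one_iff, Left.neg_nonpos_iff]
    positivity
  refine (hf.bdd_smul (φ := fun v ↦ Real.exp (-(δ * ‖v‖))) 1
    (Continuous.aestronglyMeasurable (by fun_prop)) (ae_of_all _ hdecay)).congr
    (ae_of_all _ fun v ↦ ?_)
  simp [smul_smul, ← Real.exp_add]

variable [NormedSpace ℝ V] [CompleteSpace V] [SecondCountableTopology V] [SigmaFinite μ]

theorem ae_eq_zero_of_integral_smul_cexp_eventually_eq_zero {f : V → ℝ} (hδ : 0 < δ)
    (hf : Integrable (fun v ↦ Real.exp (δ * ‖v‖) • f v) μ)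
    (h : ∀ ℓ : StrongDual ℝ V, ∀ᶠ t : ℝ in 𝓝 0, ∫ v, f v • cexp ((t • ℓ) v * I) ∂μ = 0) :
    f =ᵐ[μ] 0 := by
  have hint := integrable_of_integrable_exp_mul_norm_smul hδ.le hf
  have hmeas : AEMeasurable f μ := hint.1.aemeasurable
  have := isFiniteMeasure_withDensity_ofReal hint.2
  have := isFiniteMeasure_withDensity_ofReal hint.neg.2
  have hexp : AEStronglyMeasurable (fun v ↦ Real.exp (δ * ‖v‖)) μ := by fun_prop
  have hf' : Integrable (fun v ↦ f v • Real.exp (δ * ‖v‖)) μ := by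
    simpa only [smul_eq_mul, mul_comm] using hf
  refine ae_eq_zero_of_withDensity_ofReal_eq_neg hmeas
    (measure_ext_of_charFunDual_eventually_eq hδ
      (integrable_withDensity_ofReal hmeas hexp hf')
      (integrable_withDensity_ofReal hmeas.neg hexp (by simpa using hf'.neg)) fun ℓ ↦ ?_)
  filter_upwards [h ℓ] with t ht
  have hchar : AEStronglyMeasurable (fun v ↦ cexp ((t • ℓ) v * I)) μ := by fun_prop
  rw [← sub_eq_zero, charFunDual_apply, charFunDual_apply,
    integral_withDensity_ofReal_sub_neg hmeas hchar ?_, ht]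
  exact hint.smul_bdd 1 hchar (ae_of_all _ fun v ↦ (norm_exp_ofReal_mul_I _).le)

theorem re_ae_eq_zero_of_integral_cexp_smul_eventually_eq_zero {f : V → ℂ} (hδ : 0 < δ)
    (hf : Integrable (fun v ↦ Real.exp (δ * ‖v‖) • f v) μ)
    (h : ∀ ℓ : StrongDual ℝ V, ∀ᶠ t : ℝ in 𝓝 0, ∫ v, cexp ((t • ℓ) v * I) • f v ∂μ = 0) :
    (fun v ↦ (f v).re) =ᵐ[μ] 0 := by
  have hint := integrable_of_integrable_exp_mul_norm_smul hδ.le hf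
  have hint_cexp (ℓ : StrongDual ℝ V) : Integrable (fun v ↦ cexp (ℓ v * I) • f v) μ :=
    hint.bdd_smul 1 (by fun_prop) (ae_of_all _ fun v ↦ (norm_exp_ofReal_mul_I _).le)
  have re_smul (v : V) (x : ℝ) : (f v).re • cexp (x * I) =
      (1 / 2 : ℂ) * (cexp (x * I) • f v + conj (cexp ((-x : ℝ) * I) • f v)) := by
    simp only [real_smul, smul_eq_mul, map_mul, map_neg, ← exp_conj, conj_ofReal, conj_I,
      ofReal_neg, neg_mul_neg, re_eq_add_conj]
    ring
  refine ae_eq_zero_of_integral_smul_cexp_eventually_eq_zero hδ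
    (by simpa only [RCLike.smul_re, smul_eq_mul, RCLike.re_eq_complex_re] using hf.re) fun ℓ ↦ ?_
  filter_upwards [h ℓ, h (-ℓ)] with t ht ht'
  have hconj : ∫ v, conj (cexp ((-(t • ℓ) v : ℝ) * I) • f v) ∂μ = 0 := by
    simp only [smul_neg, neg_apply] at ht'
    rw [integral_conj, ht', map_zero]
  have hint_conj : Integrable (fun v ↦ conj (cexp ((-(t • ℓ) v : ℝ) * I) • f v)) μ := by
    simpa using conjCLE.integrable_comp_iff.2 (hint_cexp (-(t • ℓ)))
  simp_rw [re_smul]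
  rw [integral_const_mul, integral_add (hint_cexp _) hint_conj, ht, hconj, add_zero, mul_zero]

theorem ae_eq_zero_of_integral_cexp_smul_eventually_eq_zero {f : V → ℂ} (hδ : 0 < δ)
    (hf : Integrable (fun v ↦ Real.exp (δ * ‖v‖) • f v) μ)
    (h : ∀ ℓ : StrongDual ℝ V, ∀ᶠ t : ℝ in 𝓝 0, ∫ v, cexp ((t • ℓ) v * I) • f v ∂μ = 0) :
    f =ᵐ[μ] 0 := by
  have him : (fun v ↦ (-I • f v).re) =ᵐ[μ] 0 := by
    refine re_ae_eq_zero_of_integral_cexp_smul_eventually_eq_zero hδ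
      (by simpa only [smul_comm _ (-I)] using hf.fun_smul (-I)) fun ℓ ↦ ?_
    filter_upwards [h ℓ] with t ht
    simp_rw [smul_comm _ (-I)]
    rw [integral_smul, ht, smul_zero]
  have hre := re_ae_eq_zero_of_integral_cexp_smul_eventually_eq_zero hδ hf h
  filter_upwards [hre, him] with v hre him
  exact Complex.ext hre (by simpa using him)

end Uniqueness

section FourierIntegral

open Filter Real
open scoped Topology

variable {V W : Type*} [NormedAddCommGroup V] [NormedSpace ℝ V] [MeasurableSpace V] [BorelSpace V]
  [SecondCountableTopology V] [CompleteSpace V] [AddCommGroup W] [Module ℝ W] [TopologicalSpace W]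
  [FirstCountableTopology W] [ContinuousSMul ℝ W] [MeasurableSpace W]

theorem ae_eq_zero_of_fourierIntegral_ae_eq_zero {μ : Measure V} [SigmaFinite μ] {ν : Measure W}
    [ν.IsOpenPosMeasure] {L : V →ₗ[ℝ] W →ₗ[ℝ] ℝ} (hL : Continuous fun q : V × W ↦ L q.1 q.2)
    (hL_surj : ∀ ℓ : StrongDual ℝ V, ∃ w, ∀ v, L v w = ℓ v) {S : Set W} (hS : S ∈ 𝓝 0)
    {f : V → ℂ} {δ : ℝ} (hδ : 0 < δ) (hf : Integrable (fun v ↦ exp (δ * ‖v‖) • f v) μ)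
    (h : VectorFourier.fourierIntegral probChar μ L f =ᵐ[ν.restrict S] 0) : f =ᵐ[μ] 0 := by
  have hcont : Continuous (VectorFourier.fourierIntegral probChar μ L f) :=
    VectorFourier.fourierIntegral_continuous continuous_probChar hL
      (integrable_of_integrable_exp_mul_norm_smul hδ.le hf)
  have hzero : ∀ᶠ w in 𝓝 0, VectorFourier.fourierIntegral probChar μ L f w = 0 :=
    mem_of_superset (interior_mem_nhds.2 hS) <|
      Measure.eqOn_open_of_ae_eq (ae_restrict_of_ae_restrict_of_subset interior_subset h)
        isOpen_interior hcont.continuousOn continuousOn_const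
  refine ae_eq_zero_of_integral_cexp_smul_eventually_eq_zero hδ hf fun ℓ ↦ ?_
  obtain ⟨w, hw⟩ := hL_surj (-ℓ)
  have hray : Tendsto (fun t : ℝ ↦ t • w) (𝓝 0) (𝓝 0) :=
    Continuous.tendsto' (by fun_prop) _ _ (zero_smul ℝ w)
  filter_upwards [hray.eventually hzero] with t ht
  simpa [VectorFourier.fourierIntegral_probChar, hw] using ht

end FourierIntegral

section FourierL2

open Real
open scoped InnerProductSpace

variable {V W : Type*} [AddCommGroup V] [Module ℝ V] [TopologicalSpace V]
  [AddCommGroup W] [Module ℝ W] [TopologicalSpace W] {L : V →ₗ[ℝ] W →ₗ[ℝ] ℝ}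

theorem continuous_neg_flip (hL : Continuous fun q : V × W ↦ L q.1 q.2) :
    Continuous fun q : W × V ↦ (-L.flip) q.1 q.2 :=
  (hL.comp continuous_swap).neg

variable [MeasurableSpace V] [BorelSpace V] [FirstCountableTopology W] [MeasurableSpace W]
  [BorelSpace W] {μ : Measure V} {ν : Measure W} [IsFiniteMeasure ν] {E : Type*}

theorem memLp_fourierIntegral [NormedAddCommGroup E] [NormedSpace ℂ E]
    [SecondCountableTopologyEither W E] (hL : Continuous fun q : V × W ↦ L q.1 q.2) {f : V → E}
    (hf : Integrable f μ) (p : ℝ≥0∞) :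
    MemLp (VectorFourier.fourierIntegral probChar μ L f) p ν :=
  .of_bound (VectorFourier.fourierIntegral_continuous
    continuous_probChar hL hf).aestronglyMeasurable _
    (ae_of_all _ (VectorFourier.norm_fourierIntegral_le_integral_norm probChar μ L f))

variable [NormedAddCommGroup E] [InnerProductSpace ℂ E] [SecondCountableTopology E]
  [IsFiniteMeasure μ]

/-- The Fourier transform `f ↦ (w ↦ ∫ v, exp (-i L v w) f v ∂μ)` as an operator `L²(μ) → L²(ν)`
between finite measures. With `μ` and `ν` restrictions of Lebesgue measure to bounded sets this is
the time- and band-limiting operator. -/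
noncomputable def fourierL2 (hL : Continuous fun q : V × W ↦ L q.1 q.2) (μ : Measure V)
    [IsFiniteMeasure μ] (ν : Measure W) [IsFiniteMeasure ν] : Lp E 2 μ →ₗ[ℂ] Lp E 2 ν where
  toFun f := (memLp_fourierIntegral hL ((Lp.memLp f).integrable one_le_two) 2).toLp
  map_add' f g := by
    rw [← MemLp.toLp_add]
    congr 1
    rw [VectorFourier.fourierIntegral_congr_ae _ _ _ (Lp.coeFn_add f g)]
    exact VectorFourier.fourierIntegral_add continuous_probChar hL
      ((Lp.memLp f).integrable one_le_two) ((Lp.memLp g).integrable one_le_two)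
  map_smul' a f := by
    rw [RingHom.id_apply, ← MemLp.toLp_const_smul]
    congr 1
    rw [VectorFourier.fourierIntegral_congr_ae _ _ _ (Lp.coeFn_smul a f)]
    exact VectorFourier.fourierIntegral_const_smul probChar μ L f a

theorem coeFn_fourierL2 (hL : Continuous fun q : V × W ↦ L q.1 q.2) (f : Lp E 2 μ) :
    fourierL2 hL μ ν f =ᵐ[ν] VectorFourier.fourierIntegral probChar μ L f :=
  MemLp.coeFn_toLp (memLp_fourierIntegral hL ((Lp.memLp f).integrable one_le_two) 2)

variable [FirstCountableTopology V] [SecondCountableTopologyEither W V] [CompleteSpace E]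

theorem inner_fourierL2_left (hL : Continuous fun q : V × W ↦ L q.1 q.2) (f : Lp E 2 μ)
    (g : Lp E 2 ν) :
    ⟪fourierL2 hL μ ν f, g⟫_ℂ = ⟪f, fourierL2 (continuous_neg_flip hL) ν μ g⟫_ℂ := by
  have hL' := continuous_neg_flip hL
  rw [L2.inner_def, L2.inner_def]
  calc ∫ w, ⟪fourierL2 hL μ ν f w, g w⟫_ℂ ∂ν
      = ∫ w, ⟪VectorFourier.fourierIntegral probChar μ L f w, g w⟫_ℂ ∂ν :=
        integral_congr_ae <| by filter_upwards [coeFn_fourierL2 hL f] with w hw; rw [hw]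
    _ = ∫ v, ⟪f v, VectorFourier.fourierIntegral probChar ν (-L.flip) g v⟫_ℂ ∂μ :=
        VectorFourier.integral_sesq_fourierIntegral_eq_neg_flip (innerSL ℂ) continuous_probChar hL
          ((Lp.memLp f).integrable one_le_two) ((Lp.memLp g).integrable one_le_two)
    _ = ∫ v, ⟪f v, fourierL2 hL' ν μ g v⟫_ℂ ∂μ :=
        integral_congr_ae <| by filter_upwards [coeFn_fourierL2 hL' g] with v hv; rw [hv]

theorem denseRange_fourierL2 (hL : Continuous fun q : V × W ↦ L q.1 q.2)
    (h : Function.Injective (fourierL2 (E := E) (continuous_neg_flip hL) ν μ)) :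
    DenseRange (fourierL2 (E := E) hL μ ν) := by
  have horth : (fourierL2 (E := E) hL μ ν).rangeᗮ = ⊥ := by
    refine (Submodule.eq_bot_iff _).2 fun g hg ↦ (map_eq_zero_iff _ h).1 ?_
    refine ext_inner_left ℂ fun f ↦ ?_
    rw [← inner_fourierL2_left hL, inner_zero_right]
    exact hg _ (LinearMap.mem_range_self _ f)
  exact Submodule.dense_iff_topologicalClosure_eq_top.2
    (Submodule.topologicalClosure_eq_top_iff.2 horth)

end FourierL2

section WeightedL2

open Module Real
open scoped NNReal

variable {E : Type*} [NormedAddCommGroup E]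

theorem lintegral_indicator_sq_mul_lt_top {α : Type*} [MeasurableSpace α] {ρ : Measure α}
    {f : α → E} {w : α → ℝ≥0∞} {U : Set α} (hU : MeasurableSet U) {M : ℝ≥0}
    (hw : ∀ v ∈ U, w v ≤ M) (hf : MemLp f 2 (ρ.restrict U)) :
    ∫⁻ v, (‖U.indicator f v‖₊ : ℝ≥0∞) ^ 2 * w v ∂ρ < ⊤ := by
  have hpoint (v : α) : (‖U.indicator f v‖₊ : ℝ≥0∞) ^ 2 * w v ≤
      U.indicator (fun v ↦ M * ‖f v‖ₑ ^ 2) v := by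
    by_cases hv : v ∈ U
    · simp only [indicator_of_mem hv, enorm_eq_nnnorm]
      rw [mul_comm]
      gcongr
      exact hw v hv
    · simp [hv]
  have hfin := lintegral_rpow_enorm_lt_top_of_eLpNorm_lt_top two_ne_zero ENNReal.ofNat_ne_top hf.2
  simp only [ENNReal.toReal_ofNat, ENNReal.rpow_ofNat] at hfin
  refine (lintegral_mono hpoint).trans_lt ?_
  rw [lintegral_indicator hU, lintegral_const_mul' _ _ ENNReal.coe_ne_top]
  exact ENNReal.mul_lt_top ENNReal.coe_lt_top hfin

variable [NormedSpace ℝ E] {V : Type*} [NormedAddCommGroup V] [MeasurableSpace V] [BorelSpace V]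
  {ρ : Measure V} {f : V → E} {w : V → ℝ≥0∞}

theorem memLp_exp_mul_norm_smul_of_lintegral_lt_top {a : ℝ} {K : ℝ≥0}
    (hw : ∀ v, ENNReal.ofReal (exp (a * ‖v‖)) ≤ K * w v) (hf : AEStronglyMeasurable f ρ)
    (hfw : ∫⁻ v, (‖f v‖₊ : ℝ≥0∞) ^ 2 * w v ∂ρ < ⊤) :
    MemLp (fun v ↦ exp (a / 2 * ‖v‖) • f v) 2 ρ := by
  have hpoint (v : V) :
      ‖exp (a / 2 * ‖v‖) • f v‖ₑ ^ 2 ≤ K * ((‖f v‖₊ : ℝ≥0∞) ^ 2 * w v) := by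
    calc ‖exp (a / 2 * ‖v‖) • f v‖ₑ ^ 2 = ENNReal.ofReal (exp (a * ‖v‖)) * ‖f v‖ₑ ^ 2 := by
          rw [enorm_smul, Real.enorm_of_nonneg (exp_nonneg _), mul_pow,
            ← ENNReal.ofReal_pow (exp_nonneg _), ← exp_nat_mul, ← mul_assoc, Nat.cast_ofNat,
            mul_div_cancel₀ a two_ne_zero]
      _ ≤ K * w v * ‖f v‖ₑ ^ 2 := by gcongr; exact hw v
      _ = K * ((‖f v‖₊ : ℝ≥0∞) ^ 2 * w v) := by rw [enorm_eq_nnnorm]; ring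
  refine ⟨by fun_prop, ?_⟩
  rw [eLpNorm_lt_top_iff_lintegral_rpow_enorm_lt_top two_ne_zero ENNReal.ofNat_ne_top]
  simp only [ENNReal.toReal_ofNat, ENNReal.rpow_ofNat]
  refine (lintegral_mono hpoint).trans_lt ?_
  rw [lintegral_const_mul' _ _ ENNReal.coe_ne_top]
  exact ENNReal.mul_lt_top ENNReal.coe_lt_top hfw

theorem integrable_exp_mul_norm_smul_of_ae_norm_le {C : ℝ} (a : ℝ) (hC : ∀ᵐ v ∂ρ, ‖v‖ ≤ C)
    (hf : Integrable f ρ) : Integrable (fun v ↦ exp (a * ‖v‖) • f v) ρ := by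
  refine hf.bdd_smul (φ := fun v ↦ exp (a * ‖v‖)) (exp (|a| * C))
    (Continuous.aestronglyMeasurable (by fun_prop)) ?_
  filter_upwards [hC] with v hv
  rw [norm_eq_abs, abs_exp]
  gcongr
  exact le_abs_self a

variable [NormedSpace ℝ V] [FiniteDimensional ℝ V] [ρ.IsAddHaarMeasure] {a : ℝ}

theorem integrable_exp_neg_mul_norm (ha : 0 < a) : Integrable (fun v ↦ exp (-(a * ‖v‖))) ρ := by
  set n := finrank ℝ V + 1
  have hdecay (v : V) :
      exp (-(a * ‖v‖)) ≤ exp a * n.factorial / a ^ n * (1 + ‖v‖) ^ (-(n : ℝ)) := by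
    have hexp : a ^ n * (1 + ‖v‖) ^ n ≤ exp a * exp (a * ‖v‖) * n.factorial := by
      rw [← mul_pow, ← exp_add, ← div_le_iff₀ (by positivity)]
      simpa only [mul_one_add] using pow_div_factorial_le_exp (a * (1 + ‖v‖)) (by positivity) n
    rw [exp_neg, rpow_neg (by positivity), rpow_natCast, ← div_eq_mul_inv, div_div,
      le_div_iff₀ (by positivity), inv_mul_le_iff₀ (exp_pos _)]
    linarith
  have hn : (finrank ℝ V : ℝ) < n := by exact_mod_cast Nat.lt_succ_self _
  refine ((integrable_one_add_norm (μ := ρ) hn).const_mul (exp a * n.factorial / a ^ n)).mono'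
    (by fun_prop) (ae_of_all _ fun v ↦ ?_)
  simpa only [norm_eq_abs, abs_exp] using hdecay v

theorem integrable_exp_mul_norm_smul_of_lintegral_lt_top {K : ℝ≥0} (ha : 0 < a)
    (hw : ∀ v, ENNReal.ofReal (exp (a * ‖v‖)) ≤ K * w v) (hf : AEStronglyMeasurable f ρ)
    (hfw : ∫⁻ v, (‖f v‖₊ : ℝ≥0∞) ^ 2 * w v ∂ρ < ⊤) :
    Integrable (fun v ↦ exp (a / 4 * ‖v‖) • f v) ρ := by
  have hdecay : MemLp (fun v ↦ exp (-(a / 4 * ‖v‖))) 2 ρ := by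
    refine (memLp_two_iff_integrable_sq (by fun_prop)).2 ?_
    have hsq (v : V) : exp (-(a / 4 * ‖v‖)) ^ 2 = exp (-(a / 2 * ‖v‖)) := by
      rw [← exp_nat_mul]
      ring_nf
    simpa only [hsq] using integrable_exp_neg_mul_norm (half_pos ha)
  have hgrowth := memLp_exp_mul_norm_smul_of_lintegral_lt_top hw hf hfw
  refine (memLp_one_iff_integrable.1 (hgrowth.smul hdecay)).congr (ae_of_all _ fun v ↦ ?_)
  rw [Pi.smul_apply', smul_smul, ← exp_add]
  ring_nf

end WeightedL2

section TensorWeights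

open Filter Real
open scoped NNReal Topology

variable {ι : Type*} [Fintype ι] {W : ℝ → ℝ≥0∞}

theorem ofReal_exp_mul_norm_le_prod {a : ℝ} (ha : 0 ≤ a) {K : ℝ≥0∞}
    (hW : ∀ x, ENNReal.ofReal (exp (a * |x|)) ≤ K * W x) (b : ι → ℝ) :
    ENNReal.ofReal (exp (a * ‖b‖)) ≤ K ^ Fintype.card ι * ∏ j, W (b j) := by
  have hnorm : ‖b‖ ≤ ∑ j, |b j| :=
    (pi_norm_le_iff_of_nonneg (by positivity)).2 fun j ↦
      Finset.single_le_sum (f := fun j ↦ |b j|) (fun _ _ ↦ abs_nonneg _) (Finset.mem_univ j)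
  calc ENNReal.ofReal (exp (a * ‖b‖)) ≤ ENNReal.ofReal (exp (a * ∑ j, |b j|)) := by gcongr
    _ = ∏ j, ENNReal.ofReal (exp (a * |b j|)) := by
      rw [Finset.mul_sum, exp_sum, ENNReal.ofReal_prod_of_nonneg fun _ _ ↦ exp_nonneg _]
    _ ≤ ∏ j, K * W (b j) := Finset.prod_le_prod' fun j _ ↦ hW (b j)
    _ = K ^ Fintype.card ι * ∏ j, W (b j) := by
      rw [Finset.prod_mul_distrib, Finset.prod_const, Finset.card_univ]

theorem eventually_prod_le_pow {M : ℝ≥0∞} (hW : ∀ᶠ x in 𝓝 0, W x ≤ M) :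
    ∀ᶠ b : ι → ℝ in 𝓝 0, ∏ j, W (b j) ≤ M ^ Fintype.card ι := by
  have hcoord (j : ι) : ∀ᶠ b : ι → ℝ in 𝓝 0, W (b j) ≤ M :=
    ((continuous_apply j).tendsto' (0 : ι → ℝ) 0 rfl).eventually hW
  filter_upwards [eventually_all.2 hcoord] with b hb
  exact (Finset.prod_le_prod' fun j _ ↦ hb j).trans_eq (by simp)

variable {R : ℝ}

theorem ofReal_exp_le_mul_boxWeight (hR : 0 < R) (x : ℝ) :
    ENNReal.ofReal (exp (1 / R * |x|)) ≤ ENNReal.ofReal (exp 1) * boxWeight R x := by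
  by_cases hx : |x| ≤ R
  · rw [boxWeight, if_pos hx, mul_one, one_div_mul_eq_div]
    gcongr
    exact (div_le_one hR).2 hx
  · rw [boxWeight, if_neg hx, ENNReal.mul_top (by simp [exp_pos])]
    exact le_top

theorem ofReal_exp_le_mul_coshWeight (hR : 0 < R) (x : ℝ) :
    ENNReal.ofReal (exp (1 / R * |x|)) ≤ 2 * coshWeight R x := by
  have hexp : exp (1 / R * |x|) ≤ 2 * cosh (x / R) := by
    rw [← cosh_abs, abs_div, abs_of_pos hR, one_div_mul_eq_div, cosh_eq]
    linarith [exp_pos (-(|x| / R))]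
  calc ENNReal.ofReal (exp (1 / R * |x|)) ≤ ENNReal.ofReal (2 * cosh (x / R)) := by gcongr
    _ = 2 * coshWeight R x := by
      rw [coshWeight, ENNReal.ofReal_mul zero_le_two, ENNReal.ofReal_ofNat]

theorem eventually_boxWeight_le_one (hR : 0 < R) : ∀ᶠ x in 𝓝 0, boxWeight R x ≤ 1 := by
  filter_upwards [continuous_abs.tendsto' 0 0 abs_zero |>.eventually_le_const hR] with x hx
  rw [boxWeight, if_pos hx]

theorem eventually_coshWeight_le_two : ∀ᶠ x in 𝓝 0, coshWeight R x ≤ 2 := by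
  have hcont : Continuous (coshWeight R) := ENNReal.continuous_ofReal.comp (by fun_prop)
  have hlt : coshWeight R 0 < 2 := by simp [coshWeight]
  exact (hcont.tendsto 0).eventually_le_const hlt

theorem exists_exp_le_mul_and_eventually_le (hR : 0 < R)
    (hW : W = boxWeight R ∨ W = coshWeight R) :
    ∃ K M : ℝ≥0, (∀ x, ENNReal.ofReal (exp (1 / R * |x|)) ≤ K * W x) ∧ ∀ᶠ x in 𝓝 0, W x ≤ M := by
  rcases hW with rfl | rfl
  · exact ⟨(exp 1).toNNReal, 1, ofReal_exp_le_mul_boxWeight hR, eventually_boxWeight_le_one hR⟩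
  · exact ⟨2, 2, ofReal_exp_le_mul_coshWeight hR, eventually_coshWeight_le_two⟩

end TensorWeights

section WeightedFourier

open Filter Real
open scoped NNReal Topology

theorem fourierIntegral_indicator {V W E : Type*} [AddCommGroup V] [Module ℝ V] [MeasurableSpace V]
    [AddCommGroup W] [Module ℝ W] [NormedAddCommGroup E] [NormedSpace ℂ E] {μ : Measure V}
    {L : V →ₗ[ℝ] W →ₗ[ℝ] ℝ} {U : Set V} (hU : MeasurableSet U) (f : V → E) :
    VectorFourier.fourierIntegral probChar μ L (U.indicator f) =
      VectorFourier.fourierIntegral probChar (μ.restrict U) L f := by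
  funext u
  simp only [VectorFourier.fourierIntegral_probChar]
  rw [← integral_indicator hU]
  congr 1 with v
  by_cases hv : v ∈ U <;> simp [hv]

variable {V W : Type*} [NormedAddCommGroup V] [NormedSpace ℝ V] [MeasurableSpace V] [BorelSpace V]
  [NormedAddCommGroup W] [NormedSpace ℝ W] [MeasurableSpace W] [BorelSpace W]
  {L : V →ₗ[ℝ] W →ₗ[ℝ] ℝ} {μ : Measure V} {ν : Measure W} {w : V → ℝ≥0∞}

theorem dense_setOf_ae_eq_fourierIntegral [CompleteSpace W] [SecondCountableTopology W]
    [SecondCountableTopology V] [IsLocallyFiniteMeasure μ] [μ.IsOpenPosMeasure] [IsFiniteMeasure ν]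
    (hL : Continuous fun q : V × W ↦ L q.1 q.2)
    (hL_surj : ∀ ℓ : StrongDual ℝ W, ∃ v, ∀ u, L v u = ℓ u) {C : ℝ} (hν : ∀ᵐ u ∂ν, ‖u‖ ≤ C)
    {M : ℝ≥0} (hw : ∀ᶠ v in 𝓝 0, w v ≤ M) :
    Dense {g : Lp ℂ 2 ν | ∃ f : V → ℂ, AEStronglyMeasurable f μ ∧
      ∫⁻ v, (‖f v‖₊ : ℝ≥0∞) ^ 2 * w v ∂μ < ⊤ ∧
        g =ᵐ[ν] VectorFourier.fourierIntegral probChar μ L f} := by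
  obtain ⟨U₀, hU₀, hμU₀⟩ := μ.finiteAt_nhds 0
  obtain ⟨r, hr, hrU⟩ := Metric.nhds_basis_closedBall.mem_iff.1 (inter_mem hU₀ hw)
  set U := Metric.closedBall (0 : V) r
  have hU : MeasurableSet U := Metric.isClosed_closedBall.measurableSet
  have : IsFiniteMeasure (μ.restrict U) :=
    isFiniteMeasure_restrict.2 ((measure_mono (hrU.trans inter_subset_left)).trans_lt hμU₀).ne
  have hinj : Function.Injective
      (fourierL2 (E := ℂ) (continuous_neg_flip hL) ν (μ.restrict U)) := by
    refine (injective_iff_map_eq_zero _).2 fun g hg ↦ Lp.eq_zero_iff_ae_eq_zero.2 ?_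
    refine ae_eq_zero_of_fourierIntegral_ae_eq_zero (continuous_neg_flip hL) (fun ℓ ↦ ?_)
      (Metric.closedBall_mem_nhds 0 hr) one_pos (integrable_exp_mul_norm_smul_of_ae_norm_le 1 hν
        ((Lp.memLp g).integrable one_le_two))
      ((coeFn_fourierL2 (continuous_neg_flip hL) g).symm.trans (Lp.eq_zero_iff_ae_eq_zero.1 hg))
    obtain ⟨v, hv⟩ := hL_surj (-ℓ)
    exact ⟨v, by simp [hv]⟩
  refine (denseRange_fourierL2 hL hinj).mono ?_
  rintro _ ⟨f, rfl⟩
  have hf := Lp.memLp f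
  refine ⟨U.indicator f, (aestronglyMeasurable_indicator_iff hU).2 hf.1,
    lintegral_indicator_sq_mul_lt_top hU (fun v hv ↦ (hrU hv).2) hf, ?_⟩
  rw [fourierIntegral_indicator hU]
  exact coeFn_fourierL2 hL f

end WeightedFourier

section ScaledPairing

open Real

variable {ι : Type*} [Fintype ι] {c : ℝ}

/-- The pairing `(b, u) ↦ -c ⟨b, u⟩`, for which `VectorFourier.fourierIntegral Real.probChar` is
`u ↦ 𝓕[f](c u)`: Mathlib's kernel `exp (-i L b u)` has the opposite sign to the paper's. -/
noncomputable def scaledPairing (ι : Type*) [Fintype ι] (c : ℝ) :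
    (ι → ℝ) →ₗ[ℝ] (ι → ℝ) →ₗ[ℝ] ℝ :=
  -c • dotProductBilin ℝ ℝ

theorem scaledPairing_apply (b u : ι → ℝ) : scaledPairing ι c b u = -c * ∑ j, b j * u j :=
  rfl

theorem paperFourierP_smul {p : ℕ} (f : (Fin p → ℝ) → ℂ) (u : Fin p → ℝ) :
    paperFourierP p f (c • u) =
      VectorFourier.fourierIntegral probChar volume (scaledPairing (Fin p) c) f u := by
  have hphase (b : Fin p → ℝ) : ∑ j, b j * (c • u) j = -scaledPairing (Fin p) c b u := by
    simp only [scaledPairing_apply, Pi.smul_apply, smul_eq_mul, Finset.mul_sum, neg_mul,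
      Finset.sum_neg_distrib, neg_neg, mul_left_comm c]
  simp only [paperFourierP, VectorFourier.fourierIntegral_probChar, hphase, smul_eq_mul,
    Complex.ofReal_neg, mul_comm Complex.I]

theorem continuous_scaledPairing :
    Continuous fun q : (ι → ℝ) × (ι → ℝ) ↦ scaledPairing ι c q.1 q.2 := by
  simp only [scaledPairing_apply]
  fun_prop

theorem scaledPairing_comm (b u : ι → ℝ) : scaledPairing ι c b u = scaledPairing ι c u b := by
  simp only [scaledPairing_apply, mul_comm]

theorem exists_scaledPairing_eq (hc : c ≠ 0) (ℓ : StrongDual ℝ (ι → ℝ)) :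
    ∃ u, ∀ b, scaledPairing ι c u b = ℓ b := by
  classical
  refine ⟨fun j ↦ -c⁻¹ * ℓ fun i ↦ if j = i then 1 else 0, fun b ↦ ?_⟩
  have hℓ : ℓ b = ∑ j, b j * ℓ (fun i ↦ if j = i then 1 else 0) :=
    ℓ.toLinearMap.pi_apply_eq_sum_univ b
  rw [scaledPairing_apply, hℓ, Finset.mul_sum]
  refine Finset.sum_congr rfl fun j _ ↦ ?_
  field_simp

end ScaledPairing

section TruncatedFourier

open Filter Real
open scoped NNReal Topology

theorem truncated_fourier_injective_dense_range_general {p : ℕ} {c a : ℝ} (hc : c ≠ 0) (ha : 0 < a)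
    {w : (Fin p → ℝ) → ℝ≥0∞} {K M : ℝ≥0}
    (hw_growth : ∀ b, ENNReal.ofReal (exp (a * ‖b‖)) ≤ K * w b) (hw_bound : ∀ᶠ b in 𝓝 0, w b ≤ M)
    {S : Set (Fin p → ℝ)} (hS : Bornology.IsBounded S) (hS₀ : S ∈ 𝓝 0) :
    (∀ f : (Fin p → ℝ) → ℂ, AEStronglyMeasurable f volume →
        ∫⁻ b, (‖f b‖₊ : ℝ≥0∞) ^ 2 * w b < ⊤ →
        (∀ᵐ u ∂volume.restrict S, paperFourierP p f (c • u) = 0) → f =ᵐ[volume] 0) ∧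
      Dense {g : Lp ℂ 2 (volume.restrict S) | ∃ f : (Fin p → ℝ) → ℂ,
        AEStronglyMeasurable f volume ∧ ∫⁻ b, (‖f b‖₊ : ℝ≥0∞) ^ 2 * w b < ⊤ ∧
          g =ᵐ[volume.restrict S] fun u ↦ paperFourierP p f (c • u)} := by
  simp only [paperFourierP_smul]
  constructor
  · intro f hf hfw hzero
    have hL_surj (ℓ : StrongDual ℝ (Fin p → ℝ)) : ∃ u, ∀ b, scaledPairing (Fin p) c b u = ℓ b := by
      simpa only [scaledPairing_comm] using exists_scaledPairing_eq hc ℓ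
    have hf_exp := integrable_exp_mul_norm_smul_of_lintegral_lt_top ha hw_growth hf hfw
    exact ae_eq_zero_of_fourierIntegral_ae_eq_zero (L := scaledPairing (Fin p) c)
      continuous_scaledPairing hL_surj hS₀ (by positivity) hf_exp hzero
  · obtain ⟨C, hC⟩ := hS.subset_closedBall 0
    have : IsFiniteMeasure (volume.restrict S) := isFiniteMeasure_restrict.2 hS.measure_lt_top.ne
    have hν : ∀ᵐ u ∂volume.restrict S, ‖u‖ ≤ C := by
      filter_upwards [ae_restrict_of_ae_restrict_of_subset hC
        (ae_restrict_mem Metric.isClosed_closedBall.measurableSet)] with u hu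
      exact mem_closedBall_zero_iff.1 hu
    exact dense_setOf_ae_eq_fourierIntegral continuous_scaledPairing (exists_scaledPairing_eq hc)
      hν hw_bound

end TruncatedFourier

/-- Proposition 2 of the paper: for both weights `W`, the truncated Fourier operator
`𝓕_c : L²(W^{⊗p}) → L²([-1,1]^p)`, `f ↦ 𝓕[f](c ·)|_{[-1,1]^p}`, is injective and has dense
range: the closure in `L²([-1,1]^p)` of its image is the whole space.  (This is equivalent to
completeness of the two orthonormal systems of singular functions of `𝓕_c`.) -/
theorem truncated_fourier_injective_dense_range
    (p : ℕ) (R c : ℝ) (hR : 0 < R) (hc : c ≠ 0)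
    (W : ℝ → ℝ≥0∞) (hW : W = boxWeight R ∨ W = coshWeight R) :
    (∀ f : (Fin p → ℝ) → ℂ, AEStronglyMeasurable f volume →
        (∫⁻ b : Fin p → ℝ, (‖f b‖₊ : ℝ≥0∞) ^ 2 * ∏ j, W (b j)) < ⊤ →
        (∀ᵐ u ∂(volume.restrict (Set.pi Set.univ (fun _ : Fin p => Set.Icc (-1 : ℝ) 1))),
          paperFourierP p f (c • u) = 0) →
        f =ᵐ[volume] 0) ∧
      Dense {g : Lp ℂ 2
          (volume.restrict (Set.pi Set.univ (fun _ : Fin p => Set.Icc (-1 : ℝ) 1))) |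
        ∃ f : (Fin p → ℝ) → ℂ, AEStronglyMeasurable f volume ∧
          (∫⁻ b : Fin p → ℝ, (‖f b‖₊ : ℝ≥0∞) ^ 2 * ∏ j, W (b j)) < ⊤ ∧
          ⇑g =ᵐ[volume.restrict (Set.pi Set.univ (fun _ : Fin p => Set.Icc (-1 : ℝ) 1))]
            fun u => paperFourierP p f (c • u)} := by
  have hS : Bornology.IsBounded (Set.pi Set.univ fun _ : Fin p ↦ Set.Icc (-1 : ℝ) 1) :=
    (isCompact_univ_pi fun _ ↦ isCompact_Icc).isBounded
  have hS₀ : (Set.pi Set.univ fun _ : Fin p ↦ Set.Icc (-1 : ℝ) 1) ∈ nhds 0 :=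
    set_pi_mem_nhds finite_univ fun _ _ ↦ Icc_mem_nhds (by simp) (by simp)
  obtain ⟨K, M, hK, hM⟩ := exists_exp_le_mul_and_eventually_le hR hW
  have hgrowth := ofReal_exp_mul_norm_le_prod (ι := Fin p) (one_div_pos.2 hR).le hK
  have hbound := eventually_prod_le_pow (ι := Fin p) hM
  simp only [Fintype.card_fin, ← ENNReal.coe_pow] at hgrowth hbound
  exact truncated_fourier_injective_dense_range_general hc (one_div_pos.2 hR) hgrowth hbound hS hS₀
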